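/- Let G be a connected bipartite cubic graph of order n. Then G admits an IPD consisting of at most n/3 induced paths, i.e., ρ(G) ≤ n/3. -/

import Mathlib

open SimpleGraph

variable {V : Type*} [Fintype V]

/-- P is a set of vertices inducing a path on n vertices in G. -/
def IsInducedPathOn (G : SimpleGraph V) (P : Set V) (n : ℕ) : Prop :=
  Nonempty (G.induce P ≃g pathGraph n)

/-- G has an induced path decomposition into induced paths each of order ≥ 2. -/
def HasIPD (G : SimpleGraph V) : Prop :=
  ∃ D : Set (Set V), Setoid.IsPartition D ∧
    ∀ P ∈ D, ∃ n, 2 ≤ n ∧ IsInducedPathOn G P n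



section Aux

set_option linter.unusedSectionVars false

theorem bool3 : ∀ x y z : Bool, x ≠ y → y ≠ z → x ≠ z → False := by decide

open Classical in
theorem hall_inv {P : Type*} [Fintype P] (W : P → P → ℕ) (col : P → Bool) (d : ℕ) (hd : 0 < d)
    (hs : ∀ p q, W p q = W q p) (hr : ∀ p, ∑ q, W p q = d)
    (hcol : ∀ p q, 0 < W p q → col p ≠ col q) :
    ∃ m : P → P, (∀ p, m (m p) = p) ∧ ∀ p, 0 < W p (m p) := by
  have H := (Finset.all_card_le_biUnion_card_iff_exists_injective
    (fun p : P => Finset.univ.filter (fun q => 0 < W p q))).1 (by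
    intro s
    set N := s.biUnion (fun p : P => Finset.univ.filter (fun q => 0 < W p q)) with hN
    have h1 : ∑ p ∈ s, ∑ q ∈ N, W p q = s.card * d := by
      rw [Finset.sum_const_nat]
      intro p hp
      rw [← hr p]
      apply Finset.sum_subset (Finset.subset_univ _)
      intro q _ hq
      by_contra h
      apply hq
      rw [hN, Finset.mem_biUnion]
      exact ⟨p, hp, by simp; omega⟩
    have h2 : ∑ q ∈ N, ∑ p ∈ s, W p q ≤ N.card * d := by
      apply Finset.sum_le_card_nsmul
      intro q _
      rw [← hr q]
      calc ∑ p ∈ s, W p q ≤ ∑ p, W p q := Finset.sum_le_sum_of_subset (Finset.subset_univ _)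
        _ = _ := Finset.sum_congr rfl (fun p _ => hs p q)
    rw [Finset.sum_comm, h1] at h2
    exact Nat.le_of_mul_le_mul_right h2 hd)
  obtain ⟨f, hf, hfm⟩ := H
  have hW : ∀ p, 0 < W p (f p) := fun p => by simpa using hfm p
  let e : P ≃ P := Equiv.ofBijective f (Finite.injective_iff_bijective.1 hf)
  have he : ∀ p, e p = f p := fun p => rfl
  have hWsymm : ∀ p, 0 < W p (e.symm p) := fun p => by
    have := hW (e.symm p)
    rw [← he, e.apply_symm_apply, hs] at this
    exact this
  refine ⟨fun p => if col p then e p else e.symm p, ?_, ?_⟩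
  · intro p
    have h1 := hcol _ _ (hW p)
    have h2 := hcol _ _ (hWsymm p)
    rw [← he] at h1
    by_cases h : col p
    · have : col (e p) = false := by simpa [h] using h1.symm
      simp [h, this]
    · have : col (e.symm p) = true := by
        simp only [Bool.not_eq_true] at h
        simpa [h] using h2.symm
      simp [h, this]
  · intro p
    by_cases h : col p
    · simpa [h, he] using hW p
    · simpa [h] using hWsymm p

/-- A 4-cycle. -/
def Sq (G : SimpleGraph V) (a b c d : V) : Prop :=
  G.Adj a b ∧ G.Adj b c ∧ G.Adj c d ∧ G.Adj d a ∧ a ≠ c ∧ b ≠ d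

/-- A 4-cycle none of whose edges is in the matching. -/
def Unhit (G : SimpleGraph V) (m : V → V) (a b c d : V) : Prop :=
  Sq G a b c d ∧ m a ≠ b ∧ m b ≠ c ∧ m c ≠ d ∧ m d ≠ a

/-- Vertex set of a 4-cycle. -/
def IsSq (G : SimpleGraph V) (s : Set V) : Prop := ∃ a b c d, s = {a, b, c, d} ∧ Sq G a b c d

/-- 4-cycle meeting no other 4-cycle. -/
def Iso (G : SimpleGraph V) (s : Set V) : Prop :=
  IsSq G s ∧ ∀ r, IsSq G r → ∀ v, v ∈ s → v ∈ r → r = s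

/-- A perfect matching as an involution. -/
def PM (G : SimpleGraph V) (m : V → V) : Prop := (∀ v, m (m v) = v) ∧ ∀ v, G.Adj v (m v)

/-- At most three neighbours. -/
def Three (G : SimpleGraph V) : Prop := ∀ v x y z w, G.Adj v x → G.Adj v y → G.Adj v z →
  x ≠ y → x ≠ z → y ≠ z → G.Adj v w → w = x ∨ w = y ∨ w = z

theorem Unhit.rot {G : SimpleGraph V} {m : V → V} {a b c d : V} (h : Unhit G m a b c d) :
    Unhit G m b c d a := by
  unfold Unhit Sq at *; grind

theorem Unhit.refl' {G : SimpleGraph V} {m : V → V} (hm : PM G m) {a b c d : V}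
    (h : Unhit G m a b c d) : Unhit G m b a d c := by
  obtain ⟨⟨h1, h2, h3, h4, h5, h6⟩, h7, h8, h9, h10⟩ := h
  have := hm.1
  exact ⟨⟨h1.symm, h4.symm, h3.symm, h2.symm, h6, h5⟩, by grind, by grind, by grind, by grind⟩

theorem Unhit.nbr {G : SimpleGraph V} {m : V → V} (hm : PM G m) (h3 : Three G) {a b c d : V}
    (h : Unhit G m a b c d) {y : V} (hy : G.Adj a y) : y = b ∨ y = d ∨ y = m a := by
  obtain ⟨⟨h1, h2, h3', h4, h5, h6⟩, h7, h8, h9, h10⟩ := h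
  have := hm.1
  exact h3 a b d (m a) y h1 h4.symm (hm.2 a) h6 h7.symm (by grind) hy

/-- The flipped matching. -/
noncomputable def flip' (m : V → V) (a b : V) : V → V := fun v => by
  classical
  exact if v = a then b else if v = b then a else if v = m a then m b else if v = m b then m a
    else m v

theorem flip_PM {G : SimpleGraph V} {c : V → Bool} (hc : ∀ u v, G.Adj u v → c u ≠ c v)
    {m : V → V} (hm : PM G m) {a b : V} (hab : G.Adj a b) (hmab : G.Adj (m a) (m b))
    (hne : m a ≠ b) : PM G (flip' m a b) := by
  have h1 := hm.1
  have h2 := hm.2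
  have := hc _ _ hab
  have := hc _ _ hmab
  have := hc _ _ (hm.2 a)
  have := hc _ _ (hm.2 b)
  constructor
  · intro v
    unfold flip'
    grind
  · intro v
    unfold flip'
    have := hab.symm
    have := hmab.symm
    have := h2 v
    grind

theorem flip_aux {G : SimpleGraph V} {c : V → Bool} (hc : ∀ u v, G.Adj u v → c u ≠ c v)
    (h3 : Three G) {m : V → V} (hm : PM G m) {a b p d : V} (hS : Unhit G m a b p d)
    (hmab : G.Adj (m a) (m b)) {x y z : V} (hU : Unhit G (flip' m a b) a x y z) : m a ≠ x := by
  rintro rfl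
  have hp' := flip_PM hc hm hS.1.1 hmab hS.2.1
  have hm1 := hm.1
  have hmb : flip' m a b b = a := by unfold flip'; have := hS.1.1.ne; grind
  obtain ⟨⟨q1, q2, q3, q4, q5, q6⟩, q7, q8, q9, q10⟩ := hU
  have hS2 := hS
  obtain ⟨⟨r1, r2, r3, r4, r5, r6⟩, r7, r8, r9, r10⟩ := hS2
  have hz := hS.nbr hm h3 q4.symm
  have hzd : z = d := by grind
  subst hzd
  have hy := (hS.rot.rot.rot).nbr hm h3 q3.symm
  have hd : flip' m a b z = m z := by
    have := hc _ _ r1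
    have := hc _ _ r4
    have := hc _ _ (hm.2 b)
    have hzb : z ≠ m b := fun h => bool3 (c z) (c a) (c b) ‹_› ‹_› (by rw [h]; exact Ne.symm ‹_›)
    unfold flip'; grind
  have hyp : y = p := by
    have := hp'.1 z
    have := hp'.1 y
    grind
  subst hyp
  have := hS.rot.rot.nbr hm h3 q2.symm
  grind

theorem flip_symm {G : SimpleGraph V} {c : V → Bool} (hc : ∀ u v, G.Adj u v → c u ≠ c v)
    {m : V → V} (hm : PM G m) {a b : V} (hab : G.Adj a b) (hmab : G.Adj (m a) (m b)) :
    flip' m a b = flip' m b a := by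
  have := hc _ _ hab
  have := hc _ _ hmab
  have := hc _ _ (hm.2 a)
  have := hc _ _ (hm.2 b)
  funext v
  unfold flip'
  grind

theorem flip_edge {G : SimpleGraph V} {c : V → Bool} (hc : ∀ u v, G.Adj u v → c u ≠ c v)
    (h3 : Three G) {m : V → V} (hm : PM G m) {a b p d : V} (hS : Unhit G m a b p d)
    (hmab : G.Adj (m a) (m b)) {w x y z : V} (hU : Unhit G (flip' m a b) w x y z) : m w ≠ x := by
  have hp' := flip_PM hc hm hS.1.1 hmab hS.2.1
  have hsy := flip_symm hc hm hS.1.1 hmab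
  have hS' := hS.refl' hm
  have hU' := hU.refl' hp'
  have hm1 := hm.1
  intro h
  have hwx : m x = w := by rw [← h, hm1]
  by_cases h1 : w = a
  · subst h1; exact flip_aux hc h3 hm hS hmab hU h
  by_cases h2 : w = b
  · subst h2; rw [hsy] at hU; exact flip_aux hc h3 hm hS' hmab.symm hU h
  by_cases h1 : x = a
  · subst h1; exact flip_aux hc h3 hm hS hmab hU' hwx
  by_cases h2 : x = b
  · subst h2; rw [hsy] at hU'; exact flip_aux hc h3 hm hS' hmab.symm hU' hwx
  apply hU.2.1
  unfold flip'
  grind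

theorem flip_unhit {G : SimpleGraph V} {c : V → Bool} (hc : ∀ u v, G.Adj u v → c u ≠ c v)
    (h3 : Three G) {m : V → V} (hm : PM G m) {a b p d : V} (hS : Unhit G m a b p d)
    (hmab : G.Adj (m a) (m b)) {w x y z : V} (hU : Unhit G (flip' m a b) w x y z) :
    Unhit G m w x y z :=
  ⟨hU.1, flip_edge hc h3 hm hS hmab hU, flip_edge hc h3 hm hS hmab hU.rot,
    flip_edge hc h3 hm hS hmab hU.rot.rot, flip_edge hc h3 hm hS hmab hU.rot.rot.rot⟩

theorem Sq.rot {G : SimpleGraph V} {a b c d : V} (h : Sq G a b c d) : Sq G b c d a := by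
  unfold Sq at *; grind

theorem set_rot (a b c d : V) : ({a, b, c, d} : Set V) = {b, c, d, a} := by
  ext; simp; tauto

theorem IsSq.at {G : SimpleGraph V} {s : Set V} (h : IsSq G s) {v : V} (hv : v ∈ s) :
    ∃ b c d, s = {v, b, c, d} ∧ Sq G v b c d := by
  obtain ⟨a, b, c, d, rfl, h⟩ := h
  rcases hv with rfl | rfl | rfl | rfl
  · exact ⟨_, _, _, rfl, h⟩
  · exact ⟨_, _, _, set_rot _ _ _ _, h.rot⟩
  · exact ⟨_, _, _, by rw [set_rot, set_rot], h.rot.rot⟩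
  · exact ⟨_, _, _, by rw [set_rot, set_rot, set_rot], h.rot.rot.rot⟩

theorem noniso_flip {G : SimpleGraph V} (h3 : Three G) {m : V → V} (hm : PM G m) {a b c d : V}
    (hS : Unhit G m a b c d) (hI : ¬ Iso G {a, b, c, d}) :
    ∃ a b c d, Unhit G m a b c d ∧ G.Adj (m a) (m b) := by
  have hm1 := hm.1
  have : ∃ a b c d, Unhit G m a b c d ∧ ∃ x y z, Sq G a x y z ∧
      ({a, x, y, z} : Set V) ≠ {a, b, c, d} := by
    have h1 : IsSq G {a, b, c, d} := ⟨_, _, _, _, rfl, hS.1⟩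
    have : ∃ s', IsSq G s' ∧ ∃ v, v ∈ ({a, b, c, d} : Set V) ∧ v ∈ s' ∧
        s' ≠ {a, b, c, d} := by
      by_contra hcon
      push Not at hcon
      exact hI ⟨h1, fun s' h v hv hv' => hcon s' h v hv hv'⟩
    obtain ⟨s', hs', v, hv, hv', hne⟩ := this
    obtain ⟨x, y, z, rfl, hT⟩ := hs'.at hv'
    rcases hv with rfl | rfl | rfl | rfl
    · exact ⟨_, _, _, _, hS, _, _, _, hT, hne⟩
    · exact ⟨_, _, _, _, hS.rot, _, _, _, hT, by rwa [set_rot a] at hne⟩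
    · exact ⟨_, _, _, _, hS.rot.rot, _, _, _, hT, by rwa [set_rot a, set_rot b] at hne⟩
    · exact ⟨_, _, _, _, hS.rot.rot.rot, _, _, _, hT, by rwa [set_rot a, set_rot b, set_rot c] at hne⟩
  clear hS hI a b c d
  obtain ⟨a, b, c, d, hS, x, y, z, ⟨t1, t2, t3, t4, t5, t6⟩, hne⟩ := this
  have n1 := fun y (hy : G.Adj _ y) => Unhit.nbr hm h3 (hS) hy
  have n2 := fun y (hy : G.Adj _ y) => Unhit.nbr hm h3 (hS.rot) hy
  have n3 := fun y (hy : G.Adj _ y) => Unhit.nbr hm h3 (hS.rot.rot) hy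
  have n4 := fun y (hy : G.Adj _ y) => Unhit.nbr hm h3 (hS.rot.rot.rot) hy
  have key : (y = m b ∧ G.Adj (m a) (m b)) ∨ (G.Adj (m a) (m d)) := by
    have hx := n1 _ t1
    have hz := n1 _ t4.symm
    obtain ⟨⟨r1, r2, r3, r4, r5, r6⟩, r7, r8, r9, r10⟩ := hS
    have hac : m a ≠ m c := fun h => r5 (by rw [← hm1 a, h, hm1])
    have hbd : m b ≠ m d := fun h => r6 (by rw [← hm1 b, h, hm1])
    have hmc : ¬ G.Adj (m a) c := fun h => by
      have := n3 _ h.symm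
      grind
    have s1 : ({a, b, c, d} : Set V) = {a, d, c, b} := by ext; simp; tauto
    have t2' := t2.symm
    have t3' := t3.symm
    rcases hx with rfl | rfl | rfl <;> rcases hz with rfl | rfl | rfl
    · exact absurd rfl t6
    · have := n2 _ t2; have := n4 _ t3'; grind
    · have := n2 _ t2; grind
    · have := n2 _ t3'; have := n4 _ t2; grind
    · exact absurd rfl t6
    · have := n4 _ t2; grind
    · have := n2 _ t3'; grind
    · have := n4 _ t3'; grind
    · exact absurd rfl t6
  rcases key with ⟨_, h⟩ | h
  · exact ⟨_, _, _, _, hS, h⟩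
  · exact ⟨_, _, _, _, hS.rot.rot.rot, h.symm⟩

open Classical in
theorem exists_allhit {G : SimpleGraph V} {c : V → Bool} (hc : ∀ u v, G.Adj u v → c u ≠ c v)
    (h3 : Three G) : ∀ (N : ℕ) (m : V → V), PM G m →
    (∀ a b p d, Unhit G m a b p d → ¬ Iso G {a, b, p, d}) →
    (Finset.univ.filter (fun t : V × V × V × V => Unhit G m t.1 t.2.1 t.2.2.1 t.2.2.2)).card = N →
    ∃ m, PM G m ∧ ∀ a b p d, ¬ Unhit G m a b p d := by
  intro N
  induction N using Nat.strong_induction_on with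
  | _ N ih =>
    intro m hm hI hN
    by_cases hall : ∀ a b p d, ¬ Unhit G m a b p d
    · exact ⟨m, hm, hall⟩
    push Not at hall
    obtain ⟨a, b, p, d, hS⟩ := hall
    obtain ⟨a, b, p, d, hS, hab⟩ := noniso_flip h3 hm hS (hI _ _ _ _ hS)
    have hp' := flip_PM hc hm hS.1.1 hab hS.2.1
    refine ih _ ?_ (flip' m a b) hp'
      (fun w x y z h => hI _ _ _ _ (flip_unhit hc h3 hm hS hab h)) rfl
    rw [← hN]
    apply Finset.card_lt_card
    rw [Finset.ssubset_iff_of_subset]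
    · refine ⟨(a, b, p, d), by simpa using hS, ?_⟩
      simp only [Finset.mem_filter, Finset.mem_univ, true_and]
      intro h
      apply h.2.1
      unfold flip'; grind
    · intro t ht
      simp only [Finset.mem_filter, Finset.mem_univ, true_and] at ht ⊢
      exact flip_unhit hc h3 hm hS hab ht


/-- Both vertices in a common isolated 4-cycle. -/
def IsoIn (G : SimpleGraph V) (u v : V) : Prop := ∃ s, Iso G s ∧ u ∈ s ∧ v ∈ s

theorem IsoIn.symm {G : SimpleGraph V} {u v : V} (h : IsoIn G u v) : IsoIn G v u := by
  obtain ⟨s, h1, h2, h3⟩ := h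
  exact ⟨s, h1, h3, h2⟩

theorem IsoIn.trans {G : SimpleGraph V} {u v w : V} (h : IsoIn G u v) (h' : IsoIn G v w) :
    IsoIn G u w := by
  obtain ⟨s, h1, h2, h3⟩ := h
  obtain ⟨s', h1', h2', h3'⟩ := h'
  have := h1.2 s' h1'.1 v h3 h2'
  subst this
  exact ⟨s', h1, h2, h3'⟩

theorem IsoIn.at {G : SimpleGraph V} {u : V} (h : IsoIn G u u) :
    ∃ b p d, Sq G u b p d ∧ ∀ w, IsoIn G u w ↔ w = u ∨ w = b ∨ w = p ∨ w = d := by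
  obtain ⟨s, h1, h2, -⟩ := h
  obtain ⟨b, p, d, hs, hsq⟩ := h1.1.at h2
  refine ⟨b, p, d, hsq, fun w => ⟨?_, ?_⟩⟩
  · rintro ⟨s', h1', h2', h3'⟩
    have := h1.2 s' h1'.1 u h2 h2'
    rw [this, hs] at h3'
    simpa using h3'
  · intro h
    refine ⟨s, h1, h2, ?_⟩
    rw [hs]; simpa using h

/-- Merge opposite vertices of isolated 4-cycles. -/
def isoSetoid (G : SimpleGraph V) (c : V → Bool) : Setoid V where
  r u v := u = v ∨ (c u = c v ∧ IsoIn G u v)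
  iseqv := by
    refine ⟨fun u => Or.inl rfl, ?_, ?_⟩
    · rintro u v (h | ⟨h, h'⟩)
      · exact Or.inl h.symm
      · exact Or.inr ⟨h.symm, h'.symm⟩
    · rintro u v w (rfl | ⟨h, h'⟩) (rfl | ⟨k, k'⟩)
      · exact Or.inl rfl
      · exact Or.inr ⟨k, k'⟩
      · exact Or.inr ⟨h, h'⟩
      · exact Or.inr ⟨h.trans k, h'.trans k'⟩

open Classical in
/-- Edge weights. -/
noncomputable def wt (G : SimpleGraph V) (u v : V) : ℕ :=
  if G.Adj u v then (if IsoIn G u v then 1 else 4) else 0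

open Classical in
theorem wt_symm (G : SimpleGraph V) (u v : V) : wt G u v = wt G v u := by
  unfold wt
  have h1 : G.Adj u v ↔ G.Adj v u := G.adj_comm u v
  have h2 : IsoIn G u v ↔ IsoIn G v u := ⟨IsoIn.symm, IsoIn.symm⟩
  exact if_congr h1 (if_congr h2 rfl rfl) rfl

open Classical in
theorem wt_sum_not {G : SimpleGraph V}
    (hdeg : ∀ v, (Finset.univ.filter (fun u => G.Adj v u)).card = 3) {u : V}
    (h : ¬ IsoIn G u u) : ∑ v, wt G u v = 12 := by
  unfold wt
  rw [← Finset.sum_filter]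
  have : ∀ v, ¬ IsoIn G u v := fun v hv => h (hv.trans hv.symm)
  simp [this, hdeg]

open Classical in
theorem wt_sum_iso {G : SimpleGraph V} {c : V → Bool} (hc : ∀ u v, G.Adj u v → c u ≠ c v)
    (hdeg : ∀ v, (Finset.univ.filter (fun u => G.Adj v u)).card = 3) {u : V}
    (h : IsoIn G u u) : ∑ v, wt G u v = 6 := by
  unfold wt
  rw [← Finset.sum_filter, Finset.sum_ite]
  obtain ⟨b, p, d, ⟨h1, h2, h3, h4, h5, h6⟩, hI⟩ := h.at
  have hup : ¬ G.Adj u p := fun h => bool3 _ _ _ (hc _ _ h1) (hc _ _ h2) (hc _ _ h)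
  have e : (Finset.univ.filter (fun v => G.Adj u v)).filter (fun v => IsoIn G u v) = {b, d} := by
    ext v
    simp only [Finset.mem_filter, Finset.mem_univ, true_and, hI, Finset.mem_insert,
      Finset.mem_singleton]
    constructor
    · rintro ⟨k, rfl | rfl | rfl | rfl⟩
      · exact absurd k (G.irrefl)
      · simp
      · exact absurd k hup
      · simp
    · rintro (rfl | rfl)
      · exact ⟨h1, by simp⟩
      · exact ⟨h4.symm, by simp⟩
  have hcard := Finset.card_filter_add_card_filter_not
    (s := Finset.univ.filter (fun v => G.Adj u v)) (fun v => IsoIn G u v)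
  have e2 : ((Finset.univ.filter (fun v => G.Adj u v)).filter (fun v => IsoIn G u v)).card = 2 := by
    rw [e, Finset.card_pair h6]
  rw [hdeg, e2] at hcard
  rw [Finset.sum_const, Finset.sum_const, e2]
  simp only [smul_eq_mul]
  omega

open Classical in
theorem class_sum {G : SimpleGraph V} {c : V → Bool} (hc : ∀ u v, G.Adj u v → c u ≠ c v)
    (hdeg : ∀ v, (Finset.univ.filter (fun u => G.Adj v u)).card = 3)
    (p : Quotient (isoSetoid G c)) :
    ∑ u ∈ Finset.univ.filter (fun u => (Quotient.mk (isoSetoid G c) u) = p), ∑ v, wt G u v = 12 := by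
  induction p using Quotient.inductionOn with
  | h x =>
  have hq : ∀ u, Quotient.mk (isoSetoid G c) u = Quotient.mk (isoSetoid G c) x ↔
      (u = x ∨ (c u = c x ∧ IsoIn G u x)) := fun u => Quotient.eq
  simp only [hq]
  by_cases hx : IsoIn G x x
  · obtain ⟨b, p, d, ⟨h1, h2, h3, h4, h5, h6⟩, hI⟩ := hx.at
    have hI' : ∀ w, IsoIn G w x ↔ w = x ∨ w = b ∨ w = p ∨ w = d := fun w =>
      ⟨fun h => (hI w).1 h.symm, fun h => ((hI w).2 h).symm⟩
    have : Finset.univ.filter (fun u => u = x ∨ (c u = c x ∧ IsoIn G u x)) = {x, p} := by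
      have c1 := hc _ _ h1
      have c2 := hc _ _ h2
      have c4 := hc _ _ h4
      have c3 : c p = c x := by
        by_contra hh
        exact bool3 _ _ _ c1 c2 (Ne.symm hh)
      ext w
      simp only [Finset.mem_filter, Finset.mem_univ, true_and, hI', Finset.mem_insert,
        Finset.mem_singleton]
      grind
    rw [this, Finset.sum_pair h5, wt_sum_iso hc hdeg hx, wt_sum_iso hc hdeg]
    have : IsoIn G x p := (hI p).2 (by simp)
    exact this.symm.trans this
  · have : Finset.univ.filter (fun u => u = x ∨ (c u = c x ∧ IsoIn G u x)) = {x} := by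
      ext w
      simp only [Finset.mem_filter, Finset.mem_univ, true_and, Finset.mem_singleton]
      constructor
      · rintro (h | ⟨_, h⟩)
        · exact h
        · exact absurd (h.symm.trans h) hx
      · exact Or.inl
    rw [this, Finset.sum_singleton, wt_sum_not hdeg hx]

open Classical in
theorem quot_matching {G : SimpleGraph V} {c : V → Bool} (hc : ∀ u v, G.Adj u v → c u ≠ c v)
    (hdeg : ∀ v, (Finset.univ.filter (fun u => G.Adj v u)).card = 3) :
    ∃ (m : Quotient (isoSetoid G c) → Quotient (isoSetoid G c))
      (t : Quotient (isoSetoid G c) → V), (∀ p, m (m p) = p) ∧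
      (∀ p, Quotient.mk (isoSetoid G c) (t p) = p) ∧ ∀ p, G.Adj (t p) (t (m p)) := by
  let Q := Quotient (isoSetoid G c)
  let mk : V → Q := Quotient.mk (isoSetoid G c)
  let W : Q → Q → ℕ := fun p q => ∑ u ∈ Finset.univ.filter (fun u => mk u = p),
    ∑ v ∈ Finset.univ.filter (fun v => mk v = q), wt G u v
  let col : Q → Bool := Quotient.lift c (by
    rintro a b (h | ⟨h, _⟩)
    · rw [h]
    · exact h)
  have hcolmk : ∀ v, col (mk v) = c v := fun v => rfl
  have hpos : ∀ p q, 0 < W p q → ∃ u v, mk u = p ∧ mk v = q ∧ G.Adj u v := by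
    intro p q h
    obtain ⟨u, hu, h⟩ := Finset.exists_ne_zero_of_sum_ne_zero h.ne'
    obtain ⟨v, hv, h⟩ := Finset.exists_ne_zero_of_sum_ne_zero h
    refine ⟨u, v, by simpa using hu, by simpa using hv, ?_⟩
    by_contra hn
    exact h (by simp [wt, hn])
  obtain ⟨m, hm, hW⟩ := hall_inv W col 12 (by norm_num)
    (fun p q => by
      simp only [W]
      rw [Finset.sum_comm]
      exact Finset.sum_congr rfl fun u _ => Finset.sum_congr rfl fun v _ => wt_symm G v u)
    (fun p => by
      rw [← class_sum hc hdeg p]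
      simp only [W]
      rw [Finset.sum_comm]
      exact Finset.sum_congr rfl fun u _ => Finset.sum_fiberwise _ _ _)
    (fun p q h => by
      obtain ⟨u, v, rfl, rfl, hh⟩ := hpos p q h
      exact hc _ _ hh)
  choose e1 e2 he1 he2 he using fun p => hpos p (m p) (hW p)
  have hcol : ∀ p, col p ≠ col (m p) := fun p => by
    rw [← he1 p, hcolmk, he1 p, ← he2 p, hcolmk]
    exact hc _ _ (he p)
  refine ⟨m, fun p => if col p then e1 p else e2 (m p), hm, ?_, ?_⟩
  · intro p
    by_cases h : col p
    · simpa [h] using he1 p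
    · have := he2 (m p)
      rw [hm] at this
      simpa [h] using this
  · intro p
    have h' := hcol p
    by_cases h : col p
    · have h2 : col (m p) = false := by simpa [h] using h'.symm
      simpa [h, h2, hm] using he p
    · have h2 : col (m p) = true := by
        simp only [Bool.not_eq_true] at h
        simpa [h] using h'.symm
      simpa [h, h2, hm] using (he (m p)).symm

open Classical in
theorem initial_matching {G : SimpleGraph V} {c : V → Bool} (hc : ∀ u v, G.Adj u v → c u ≠ c v)
    (hdeg : ∀ v, (Finset.univ.filter (fun u => G.Adj v u)).card = 3) :
    ∃ m, PM G m ∧ ∀ a b p d, Unhit G m a b p d → ¬ Iso G {a, b, p, d} := by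
  obtain ⟨m, t, hm, ht, hadj⟩ := quot_matching hc hdeg
  let mk : V → Quotient (isoSetoid G c) := Quotient.mk (isoSetoid G c)
  have hmk : ∀ p, mk (t p) = p := ht
  have hq : ∀ u x, mk u = mk x ↔ (u = x ∨ (c u = c x ∧ IsoIn G u x)) := fun u x => Quotient.eq
  -- in an isolated square, exactly one of two opposite vertices is selected
  have key : ∀ a b p d, Sq G a b p d → (∀ w, IsoIn G a w ↔ w = a ∨ w = b ∨ w = p ∨ w = d) →
      (t (mk a) = a ∧ t (mk p) ≠ p ∨ t (mk a) ≠ a ∧ t (mk p) = p) := by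
    rintro a b p d ⟨h1, h2, h3, h4, h5, h6⟩ hI
    have c1 := hc _ _ h1
    have c2 := hc _ _ h2
    have c4 := hc _ _ h4
    have c3 : c p = c a := by
      by_contra hh
      exact bool3 _ _ _ c1 c2 (Ne.symm hh)
    have e : mk p = mk a := (hq _ _).2 (Or.inr ⟨c3, ((hI p).2 (by simp)).symm⟩)
    have := (hq _ _).1 (hmk (mk a))
    rw [e]
    rcases this with h | ⟨k1, k2⟩
    · left; exact ⟨h, by rw [h]; exact h5⟩
    · have := (hI _).1 k2.symm
      rcases this with h | h | h | h
      · left; exact ⟨h, by rw [h]; exact h5⟩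
      · rw [h] at k1; exact absurd k1.symm c1
      · right; exact ⟨by rw [h]; exact h5.symm, h⟩
      · rw [h] at k1; exact absurd k1 c4
  have rotI : ∀ a b p d, Sq G a b p d → (∀ w, IsoIn G a w ↔ w = a ∨ w = b ∨ w = p ∨ w = d) →
      ∀ w, IsoIn G b w ↔ w = b ∨ w = p ∨ w = d ∨ w = a := by
    intro a b p d _ hI w
    have hb : IsoIn G a b := (hI b).2 (by simp)
    have : IsoIn G b w ↔ IsoIn G a w := ⟨fun h => hb.trans h, fun h => hb.symm.trans h⟩
    rw [this, hI]; tauto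
  have other : ∀ v, t (mk v) ≠ v → ∃ x, G.Adj v x ∧ t (mk x) ≠ x ∧ IsoIn G v x ∧
      ∀ y, G.Adj v y → t (mk y) ≠ y → IsoIn G v y → y = x := by
    intro v hv
    have hvv : IsoIn G v v := by
      rcases (hq _ _).1 (hmk (mk v)) with h | ⟨_, h⟩
      · exact absurd h hv
      · exact h.symm.trans h
    obtain ⟨b, p, d, hs, hI⟩ := hvv.at
    have k := key _ _ _ _ hs.rot (rotI _ _ _ _ hs hI)
    have hsc := hs
    obtain ⟨h1, h2, h3, h4, h5, h6⟩ := hs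
    have hvp : ¬ G.Adj v p := fun h => bool3 _ _ _ (hc _ _ h1) (hc _ _ h2) (hc _ _ h)
    have hv' : ¬ G.Adj v v := G.irrefl
    rcases k with ⟨k1, k2⟩ | ⟨k1, k2⟩
    · refine ⟨d, h4.symm, k2, (hI d).2 (by simp), fun y y1 y2 y3 => ?_⟩
      rcases (hI y).1 y3 with rfl | rfl | rfl | rfl
      · exact absurd y1 hv'
      · exact absurd k1 y2
      · exact absurd y1 hvp
      · rfl
    · refine ⟨b, h1, k1, (hI b).2 (by simp), fun y y1 y2 y3 => ?_⟩
      rcases (hI y).1 y3 with rfl | rfl | rfl | rfl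
      · exact absurd y1 hv'
      · rfl
      · exact absurd y1 hvp
      · exact absurd k2 y2
  choose! o ho1 ho2 ho3 ho4 using other
  let M : V → V := fun v => if t (mk v) = v then t (m (mk v)) else o v
  have M1 : ∀ v, t (mk v) = v → M v = t (m (mk v)) := fun v h => if_pos h
  have M2 : ∀ v, t (mk v) ≠ v → M v = o v := fun v h => if_neg h
  refine ⟨M, ⟨?_, ?_⟩, ?_⟩
  · intro v
    by_cases h : t (mk v) = v
    · rw [M1 v h, M1 _ (by rw [hmk]), hmk, hm, h]
    · rw [M2 v h, M2 _ (ho2 v h)]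
      exact (ho4 _ (ho2 v h) v (ho1 v h).symm h (ho3 v h).symm).symm
  · intro v
    by_cases h : t (mk v) = v
    · rw [M1 v h]
      have := hadj (mk v)
      rwa [h] at this
    · rw [M2 v h]; exact ho1 v h
  · intro a b p d hU hIso
    have hI : ∀ w, IsoIn G a w ↔ w = a ∨ w = b ∨ w = p ∨ w = d := by
      intro w
      constructor
      · rintro ⟨s', h1', h2', h3'⟩
        have := hIso.2 s' h1'.1 a (by simp) h2'
        rw [this] at h3'
        simpa using h3'
      · intro h
        exact ⟨_, hIso, by simp, by simpa using h⟩
    have k := key _ _ _ _ hU.1 hI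
    obtain ⟨⟨h1, h2, h3, h4, h5, h6⟩, h7, h8, h9, h10⟩ := hU
    have hap : ¬ G.Adj a p := fun h => bool3 _ _ _ (hc _ _ h1) (hc _ _ h2) (hc _ _ h)
    have Minv : ∀ v, t (mk v) ≠ v → M (o v) = v := by
      intro v h
      rw [M2 _ (ho2 v h)]
      exact (ho4 _ (ho2 v h) v (ho1 v h).symm h (ho3 v h).symm).symm
    rcases k with ⟨k1, k2⟩ | ⟨k1, k2⟩
    · have e1 := ho1 _ k2
      have e3 := (hI _).1 (((hI p).2 (by simp)).trans (ho3 _ k2))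
      have e4 := Minv _ k2
      rw [M2 _ k2] at h9
      rcases e3 with e | e | e | e
      · rw [e] at e1; exact hap e1.symm
      · rw [e] at e4; exact h8 e4
      · rw [e] at e1; exact G.irrefl e1
      · exact h9 e
    · have e1 := ho1 _ k1
      have e3 := (hI _).1 (ho3 _ k1)
      have e4 := Minv _ k1
      rw [M2 _ k1] at h7
      rcases e3 with e | e | e | e
      · rw [e] at e1; exact G.irrefl e1
      · exact h7 e
      · rw [e] at e1; exact hap e1
      · rw [e] at e4; exact h10 e4

open Classical in
theorem three_of_deg {G : SimpleGraph V}
    (hdeg : ∀ v, (Finset.univ.filter (fun u => G.Adj v u)).card = 3) : Three G := by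
  intro v x y z w hx hy hz hxy hxz hyz hw
  have h3 : ({x, y, z} : Finset V).card = 3 := Finset.card_eq_three.2 ⟨x, y, z, hxy, hxz, hyz, rfl⟩
  have hsub : ({x, y, z} : Finset V) ⊆ Finset.univ.filter (fun u => G.Adj v u) := by
    intro u hu
    simp only [Finset.mem_insert, Finset.mem_singleton] at hu
    rcases hu with rfl | rfl | rfl <;> simpa
  have := Finset.eq_of_subset_of_card_le hsub (by rw [hdeg, h3])
  have hw' : w ∈ Finset.univ.filter (fun u => G.Adj v u) := by simpa
  rw [← this] at hw'
  simpa using hw'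

open Classical in
/-- A 2-factor (given by a cyclic orientation) without 4-cycles. -/
theorem exists_two_factor {G : SimpleGraph V} {c : V → Bool} (hc : ∀ u v, G.Adj u v → c u ≠ c v)
    (hdeg : ∀ v, (Finset.univ.filter (fun u => G.Adj v u)).card = 3) :
    ∃ σ : V → V, Function.Injective σ ∧ (∀ v, G.Adj v (σ v)) ∧ (∀ v, σ (σ v) ≠ v) ∧
      ∀ v, σ (σ (σ (σ v))) ≠ v := by
  have h3 := three_of_deg hdeg
  obtain ⟨m0, hm0, hI⟩ := initial_matching hc hdeg
  obtain ⟨m, hm, hU⟩ := exists_allhit hc h3 _ m0 hm0 hI rfl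
  have hm1 := hm.1
  have hcard : ∀ v, (Finset.univ.filter (fun u => G.Adj v u ∧ u ≠ m v)).card = 2 := by
    intro v
    have : Finset.univ.filter (fun u => G.Adj v u ∧ u ≠ m v) =
        (Finset.univ.filter (fun u => G.Adj v u)).erase (m v) := by
      ext u; simp [and_comm]
    rw [this, Finset.card_erase_of_mem (by simpa using hm.2 v), hdeg]
  obtain ⟨m1, h11, h12⟩ := hall_inv (fun u v => if G.Adj u v ∧ v ≠ m u then 1 else 0) c 2
    (by norm_num)
    (fun p q => by
      have : (G.Adj p q ∧ q ≠ m p) ↔ (G.Adj q p ∧ p ≠ m q) := by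
        rw [G.adj_comm]
        have : q = m p ↔ p = m q := ⟨fun h => by rw [h, hm1], fun h => by rw [h, hm1]⟩
        rw [Ne, this]
      exact if_congr this rfl rfl)
    (fun p => by
      rw [← Finset.sum_filter, Finset.sum_const, hcard]; simp)
    (fun p q h => by
      have : G.Adj p q ∧ q ≠ m p := by
        by_contra hn
        simp [hn] at h
      exact hc _ _ this.1)
  have hm1adj : ∀ v, G.Adj v (m1 v) ∧ m1 v ≠ m v := by
    intro v
    by_contra hn
    have := h12 v
    simp [hn] at this
  have hthird : ∀ v, ∃ x, G.Adj v x ∧ x ≠ m v ∧ x ≠ m1 v := by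
    intro v
    obtain ⟨x, hx⟩ : ((Finset.univ.filter (fun u => G.Adj v u ∧ u ≠ m v)).erase (m1 v)).Nonempty := by
      rw [← Finset.card_pos, Finset.card_erase_of_mem (by simpa using hm1adj v), hcard]
      norm_num
    simp only [Finset.mem_erase, Finset.mem_filter, Finset.mem_univ, true_and] at hx
    exact ⟨x, hx.2.1, hx.2.2, hx.1⟩
  choose m2 k1 k2 k3 using hthird
  have h22 : ∀ v, m2 (m2 v) = v := by
    intro v
    have := h3 (m2 v) (m (m2 v)) (m1 (m2 v)) (m2 (m2 v)) v (hm.2 _) (hm1adj _).1 (k1 _)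
      (hm1adj _).2.symm (k2 _).symm (k3 _).symm (k1 v).symm
    rcases this with h | h | h
    · exact absurd ((hm1 (m2 v)).symm.trans (congrArg m h.symm)) (k2 v)
    · exact absurd ((h11 (m2 v)).symm.trans (congrArg m1 h.symm)) (k3 v)
    · exact h.symm
  have hσadj : ∀ v, G.Adj v (if c v then m1 v else m2 v) := by
    intro v
    split_ifs
    · exact (hm1adj v).1
    · exact k1 v
  have hσm : ∀ v, m v ≠ (if c v then m1 v else m2 v) := by
    intro v
    split_ifs
    · exact (hm1adj v).2.symm
    · exact (k2 v).symm
  have hσ2 : ∀ v, (fun v => if c v then m1 v else m2 v)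
      ((fun v => if c v then m1 v else m2 v) v) ≠ v := by
    intro v
    have := hc _ _ (hσadj v)
    have a1 := k3 v
    have a2 := k3 (m1 v)
    have a3 := k3 (m2 v)
    grind
  refine ⟨fun v => if c v then m1 v else m2 v, ?_, hσadj, hσ2, ?_⟩
  · intro u v huv
    have e1 := hc _ _ (hσadj u)
    have e2 := hc _ _ (hσadj v)
    have : c u = c v := by
      by_contra hn
      have huv' : c (if c u then m1 u else m2 u) = c (if c v then m1 v else m2 v) :=
        congrArg c huv
      rw [huv'] at e1
      exact bool3 _ _ _ e1 e2.symm hn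
    simp only [this] at huv
    split_ifs at huv
    · rw [← h11 u, huv, h11]
    · rw [← h22 u, huv, h22]
  · intro v hv
    have b1 := hσadj
    have b2 := hσm
    let τ : V → V := fun v => if c v then m1 v else m2 v
    have hτ : ∀ v, (if c v then m1 v else m2 v) = τ v := fun _ => rfl
    change τ (τ (τ (τ v))) = v at hv
    exact hU v _ _ _ ⟨⟨b1 _, b1 _, b1 _, by
      have := b1 (τ (τ (τ v)))
      rwa [hτ, hv] at this, (hσ2 v).symm, (hσ2 (τ v)).symm⟩, b2 _, b2 _, b2 _, by
      have := b2 (τ (τ (τ v)))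
      rwa [hτ, hv] at this⟩

/-- U can be partitioned into induced paths of order at least 3. -/
def Good (G : SimpleGraph V) (U : Finset V) : Prop :=
  ∃ D : Finset (Finset V), (∀ P ∈ D, 3 ≤ P.card ∧ IsInducedPathOn G (P : Set V) P.card) ∧
    (∀ P ∈ D, ∀ Q ∈ D, P ≠ Q → Disjoint P Q) ∧ ∀ v, v ∈ U ↔ ∃ P ∈ D, v ∈ P

open Classical in
theorem Good.union {G : SimpleGraph V} {U U' : Finset V} (h : Good G U) (h' : Good G U')
    (hd : Disjoint U U') : Good G (U ∪ U') := by
  obtain ⟨D, a1, a2, a3⟩ := h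
  obtain ⟨D', b1, b2, b3⟩ := h'
  have hDD : ∀ P ∈ D, ∀ Q ∈ D', Disjoint P Q := by
    intro P hP Q hQ
    rw [Finset.disjoint_left] at hd ⊢
    exact fun v hv hv' => hd ((a3 v).2 ⟨P, hP, hv⟩) ((b3 v).2 ⟨Q, hQ, hv'⟩)
  refine ⟨D ∪ D', ?_, ?_, ?_⟩
  · intro P hP
    rcases Finset.mem_union.1 hP with h | h
    · exact a1 P h
    · exact b1 P h
  · intro P hP Q hQ hne
    rcases Finset.mem_union.1 hP with h | h <;> rcases Finset.mem_union.1 hQ with k | k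
    · exact a2 _ h _ k hne
    · exact hDD _ h _ k
    · exact (hDD _ k _ h).symm
    · exact b2 _ h _ k hne
  · intro v
    rw [Finset.mem_union, a3, b3]
    simp only [Finset.mem_union]
    constructor
    · rintro (⟨P, h, k⟩ | ⟨P, h, k⟩)
      · exact ⟨P, Or.inl h, k⟩
      · exact ⟨P, Or.inr h, k⟩
    · rintro ⟨P, h | h, k⟩
      · exact Or.inl ⟨P, h, k⟩
      · exact Or.inr ⟨P, h, k⟩

theorem Good.empty (G : SimpleGraph V) : Good G ∅ := ⟨∅, by simp, by simp, by simp⟩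

open Classical in
theorem seg_good {G : SimpleGraph V} {c : V → Bool} (hc : ∀ u v, G.Adj u v → c u ≠ c v)
    (f : ℕ → V) (hf : ∀ i, G.Adj (f i) (f (i + 1))) (s l : ℕ) (h3 : 3 ≤ l) (h5 : l ≤ 5)
    (hinj : Set.InjOn f (Set.Ico s (s + l)))
    (hch : ∀ i, s ≤ i → i + 3 < s + l → ¬ G.Adj (f i) (f (i + 3))) :
    Good G ((Finset.Ico s (s + l)).image f) := by
  have hcard : ((Finset.Ico s (s + l)).image f).card = l := by
    rw [Finset.card_image_of_injOn (by simpa using hinj)]; simp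
  have h2 : ∀ i, c (f (i + 2)) = c (f i) := by
    intro i
    by_contra hn
    exact bool3 _ _ _ (hc _ _ (hf i)) (hc _ _ (hf (i + 1))) (Ne.symm hn)
  have hn2 : ∀ i, ¬ G.Adj (f i) (f (i + 2)) := fun i h => hc _ _ h (h2 i).symm
  have hn4 : ∀ i, ¬ G.Adj (f i) (f (i + 4)) := fun i h =>
    hc _ _ h (by rw [h2 (i + 2), h2 i])
  have key : ∀ i j, i < j → j < l → (G.Adj (f (s + i)) (f (s + j)) ↔ i + 1 = j) := by
    intro i j hij hj
    obtain ⟨k, rfl⟩ := Nat.exists_eq_add_of_lt hij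
    have hk : k < 4 := by omega
    interval_cases k
    · simpa [add_assoc] using hf (s + i)
    · simpa [add_assoc] using hn2 (s + i)
    · simpa [add_assoc] using hch (s + i) (by omega) (by omega)
    · simpa [add_assoc] using hn4 (s + i)
  let e : pathGraph l ↪g G :=
    { toFun := fun i => f (s + i.val)
      inj' := fun i j hij => by
        have := hinj (x₁ := s + i.val) (x₂ := s + j.val) ⟨by omega, by omega⟩
          ⟨by omega, by omega⟩ hij
        exact Fin.ext (by omega)
      map_rel_iff' := by
        intro i j
        rw [pathGraph_adj]
        show G.Adj (f (s + i.val)) (f (s + j.val)) ↔ _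
        rcases lt_trichotomy i.val j.val with h | h | h
        · rw [key _ _ h j.2]; omega
        · rw [h]
          constructor
          · intro h'; exact absurd h' G.irrefl
          · intro h'; omega
        · rw [G.adj_comm, key _ _ h i.2]; omega }
  refine ⟨{(Finset.Ico s (s + l)).image f}, ?_, ?_, ?_⟩
  · intro P hP
    rw [Finset.mem_singleton] at hP
    subst hP
    rw [hcard]
    refine ⟨h3, ?_⟩
    have hr : (((Finset.Ico s (s + l)).image f : Finset V) : Set V) = Set.range e := by
      ext v
      simp only [Finset.coe_image, Finset.coe_Ico, Set.mem_image, Set.mem_Ico, Set.mem_range]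
      constructor
      · rintro ⟨i, ⟨hi, hi'⟩, rfl⟩
        refine ⟨⟨i - s, by omega⟩, ?_⟩
        show f (s + (i - s)) = f i
        congr 1; omega
      · rintro ⟨i, rfl⟩
        exact ⟨s + i.val, ⟨by omega, by omega⟩, rfl⟩
    rw [hr]
    exact ⟨e.isoInduceRange.symm⟩
  · intro P hP Q hQ hne
    rw [Finset.mem_singleton] at hP hQ
    exact absurd (hP.trans hQ.symm) hne
  · intro v; simp

open Classical in
theorem glue_good {G : SimpleGraph V} {f : ℕ → V} {r s t : ℕ} (hrs : r ≤ s) (hst : s ≤ t)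
    (hinj : Set.InjOn f (Set.Ico r t)) (h1 : Good G ((Finset.Ico r s).image f))
    (h2 : Good G ((Finset.Ico s t).image f)) : Good G ((Finset.Ico r t).image f) := by
  rw [← Finset.Ico_union_Ico_eq_Ico hrs hst, Finset.image_union]
  apply h1.union h2
  rw [Finset.disjoint_left]
  intro v hv hv'
  simp only [Finset.mem_image, Finset.mem_Ico] at hv hv'
  obtain ⟨i, hi, rfl⟩ := hv
  obtain ⟨j, hj, hij⟩ := hv'
  have := hinj (x₁ := j) (x₂ := i) ⟨by omega, by omega⟩ ⟨by omega, by omega⟩ hij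
  omega

open Classical in
theorem chunk_good {G : SimpleGraph V} {c : V → Bool} (hc : ∀ u v, G.Adj u v → c u ≠ c v)
    (f : ℕ → V) (hf : ∀ i, G.Adj (f i) (f (i + 1))) (k : ℕ) : ∀ s,
    Set.InjOn f (Set.Ico s (s + 3 * k)) → Good G ((Finset.Ico s (s + 3 * k)).image f) := by
  induction k with
  | zero => intro s _; simpa using Good.empty G
  | succ k ih =>
    intro s hinj
    have h1 : Set.InjOn f (Set.Ico s (s + 3)) :=
      hinj.mono (Set.Ico_subset_Ico_right (by omega))
    have h2 : Set.InjOn f (Set.Ico (s + 3) (s + 3 + 3 * k)) :=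
      hinj.mono (Set.Ico_subset_Ico (by omega) (by omega))
    have e : s + 3 * (k + 1) = s + 3 + 3 * k := by ring
    rw [e] at hinj ⊢
    exact glue_good (by omega) (by omega) hinj
      (seg_good hc f hf s 3 le_rfl (by norm_num) h1 (fun i _ _ => by omega)) (ih _ h2)

open Classical in
theorem orbit_good {G : SimpleGraph V} {c : V → Bool} (hc : ∀ u v, G.Adj u v → c u ≠ c v)
    (h3 : Three G) {σ : V → V} (hσ : Function.Injective σ) (hadj : ∀ v, G.Adj v (σ v))
    (hσ2 : ∀ v, σ (σ v) ≠ v) (hσ4 : ∀ v, σ (σ (σ (σ v))) ≠ v) (v : V) :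
    ∃ j, Good G ((Finset.Ico 0 (Function.minimalPeriod σ (σ^[j] v))).image
      (fun i => σ^[i] (σ^[j] v))) := by
  have hper : ∀ v, v ∈ Function.periodicPts σ := fun v => hσ.mem_periodicPts v
  have hf : ∀ v i, G.Adj (σ^[i] v) (σ^[i + 1] v) := fun v i => by
    rw [Function.iterate_succ_apply']; exact hadj _
  have hinj : ∀ v, Set.InjOn (fun i => σ^[i] v) (Set.Ico 0 (Function.minimalPeriod σ v)) := by
    intro v
    exact Function.iterate_injOn_Iio_minimalPeriod.mono (fun i hi => hi.2)
  have heven : ∀ k, c (σ^[2 * k] v) = c v := by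
    intro k
    induction k with
    | zero => rfl
    | succ k ih =>
      rw [← ih]
      by_contra hn
      exact bool3 _ _ _ (hc _ _ (hf v (2 * k))) (hc _ _ (hf v (2 * k + 1))) (Ne.symm hn)
  have hm := Function.iterate_minimalPeriod (f := σ) (x := v)
  have hpos := Function.minimalPeriod_pos_of_mem_periodicPts (hper v)
  have hmod : Function.minimalPeriod σ v % 2 = 0 := by
    by_contra hn
    obtain ⟨k, hk⟩ : ∃ k, Function.minimalPeriod σ v = 2 * k + 1 :=
      ⟨Function.minimalPeriod σ v / 2, by omega⟩
    rw [hk] at hm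
    have := hc _ _ (hf v (2 * k))
    rw [heven, hm] at this
    exact this rfl
  have hne2 : Function.minimalPeriod σ v ≠ 2 := fun h => by
    rw [h] at hm; exact hσ2 v hm
  have hne4 : Function.minimalPeriod σ v ≠ 4 := fun h => by
    rw [h] at hm; exact hσ4 v hm
  by_cases hd : Function.minimalPeriod σ v % 3 = 0
  · refine ⟨0, ?_⟩
    obtain ⟨k, hk⟩ : ∃ k, Function.minimalPeriod σ v = 3 * k :=
      ⟨Function.minimalPeriod σ v / 3, by omega⟩
    have := chunk_good hc (fun i => σ^[i] v) (hf v) k 0 (by rw [zero_add, ← hk]; exact hinj v)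
    rw [zero_add, ← hk] at this
    exact this
  have h8 : 8 ≤ Function.minimalPeriod σ v := by omega
  -- no two consecutive short chords
  have hchord : ∀ v, 8 ≤ Function.minimalPeriod σ v → ∀ i, i ≤ 1 →
      G.Adj (σ^[i] v) (σ^[i + 3] v) → ¬ G.Adj (σ^[i + 3] v) (σ^[i + 6] v) := by
    intro v h8 i hi g1 g2
    have hne : ∀ a b, a < 8 → b < 8 → a ≠ b → σ^[a] v ≠ σ^[b] v := fun a b ha hb hab he =>
      hab (hinj v (x₁ := a) (x₂ := b) ⟨by omega, by omega⟩ ⟨by omega, by omega⟩ he)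
    rcases h3 (σ^[i + 3] v) (σ^[i] v) (σ^[i + 2] v) (σ^[i + 4] v) (σ^[i + 6] v) g1.symm
      (hf v (i + 2)).symm (hf v (i + 3)) (hne _ _ (by omega) (by omega) (by omega))
      (hne _ _ (by omega) (by omega) (by omega)) (hne _ _ (by omega) (by omega) (by omega)) g2
      with h | h | h
    · exact hne _ _ (by omega) (by omega) (by omega) h
    · exact hne _ _ (by omega) (by omega) (by omega) h
    · exact hne _ _ (by omega) (by omega) (by omega) h
  obtain ⟨j, hj⟩ : ∃ j, ¬ G.Adj (σ^[j] v) (σ^[3] (σ^[j] v)) := by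
    by_cases h : G.Adj (σ^[0] v) (σ^[0 + 3] v)
    · exact ⟨3, hchord v h8 0 (by omega) h⟩
    · exact ⟨0, h⟩
  refine ⟨j, ?_⟩
  have hmp := Function.minimalPeriod_apply_iterate (hper v) j
  rw [← hmp] at h8 hd hmod
  generalize σ^[j] v = u at *
  have hinj' := hinj u
  generalize hM : Function.minimalPeriod σ u = M at *
  have hsub : ∀ a b, b ≤ M → Set.InjOn (fun i => σ^[i] u) (Set.Ico a b) := fun a b hb =>
    hinj'.mono (Set.Ico_subset_Ico (Nat.zero_le _) hb)
  have first4 : Good G ((Finset.Ico 0 4).image (fun i => σ^[i] u)) :=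
    seg_good hc (fun i => σ^[i] u) (hf u) 0 4 (by omega) (by omega) (hsub _ _ (by omega))
      (fun i _ hi => by
        obtain rfl : i = 0 := by omega
        exact hj)
  have rest : ∀ a k, a + 3 * k = M → Good G ((Finset.Ico a M).image (fun i => σ^[i] u)) := by
    rintro a k rfl
    exact chunk_good hc (fun i => σ^[i] u) (hf u) k a (hsub _ _ le_rfl)
  have hmod3 : M % 3 = 1 ∨ M % 3 = 2 := by omega
  rcases hmod3 with h1 | h2
  · exact glue_good (by omega) (by omega) (hsub _ _ le_rfl) first4 (rest 4 ((M - 4) / 3) (by omega))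
  · by_cases h4 : G.Adj (σ^[4] u) (σ^[4 + 3] u)
    · have h14 : ¬ G.Adj (σ^[1] u) (σ^[1 + 3] u) := fun h =>
        hchord u (by omega) 1 le_rfl h h4
      have first5 : Good G ((Finset.Ico 0 5).image (fun i => σ^[i] u)) :=
        seg_good hc (fun i => σ^[i] u) (hf u) 0 5 (by omega) (by omega) (hsub _ _ (by omega))
          (fun i _ hi => by
            obtain rfl | rfl : i = 0 ∨ i = 1 := by omega
            · exact hj
            · exact h14)
      exact glue_good (by omega) (by omega) (hsub _ _ le_rfl) first5
        (rest 5 ((M - 5) / 3) (by omega))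
    · have second4 : Good G ((Finset.Ico 4 8).image (fun i => σ^[i] u)) :=
        seg_good hc (fun i => σ^[i] u) (hf u) 4 4 (by omega) (by omega) (hsub _ _ (by omega))
          (fun i hi' hi => by
            obtain rfl : i = 4 := by omega
            exact h4)
      exact glue_good (by omega) (by omega) (hsub _ _ le_rfl)
        (glue_good (by omega) (by omega) (hsub _ _ (by omega)) first4 second4)
        (rest 8 ((M - 8) / 3) (by omega))

open Classical in
theorem all_good {G : SimpleGraph V} {c : V → Bool} (hc : ∀ u v, G.Adj u v → c u ≠ c v)
    (h3 : Three G) {σ : V → V} (hσ : Function.Injective σ) (hadj : ∀ v, G.Adj v (σ v))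
    (hσ2 : ∀ v, σ (σ v) ≠ v) (hσ4 : ∀ v, σ (σ (σ (σ v))) ≠ v) :
    ∀ U : Finset V, (∀ v ∈ U, σ v ∈ U) → Good G U := by
  intro U
  induction U using Finset.strongInduction with
  | H U ih =>
    intro hU
    rcases U.eq_empty_or_nonempty with rfl | ⟨v, hv⟩
    · exact Good.empty G
    obtain ⟨j, hj⟩ := orbit_good hc h3 hσ hadj hσ2 hσ4 v
    have hit : ∀ i, ∀ v ∈ U, σ^[i] v ∈ U := by
      intro i
      induction i with
      | zero => exact fun v hv => hv
      | succ i ih => intro v hv; rw [Function.iterate_succ_apply']; exact hU _ (ih v hv)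
    have hu := hit j v hv
    generalize σ^[j] v = u at *
    have hpos := Function.minimalPeriod_pos_of_mem_periodicPts (hσ.mem_periodicPts u)
    have hper := Function.iterate_minimalPeriod (f := σ) (x := u)
    generalize Function.minimalPeriod σ u = M at *
    set O := (Finset.Ico 0 M).image (fun i => σ^[i] u) with hO
    have hOU : O ⊆ U := by
      intro w hw
      obtain ⟨i, _, rfl⟩ := Finset.mem_image.1 hw
      exact hit i u hu
    have huO : u ∈ O := Finset.mem_image.2 ⟨0, by simpa using hpos, rfl⟩
    have hrec := ih (U \ O) (by
      rw [Finset.ssubset_iff_of_subset Finset.sdiff_subset]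
      exact ⟨u, hu, by simp [huO]⟩) (by
      intro w hw
      rw [Finset.mem_sdiff] at hw ⊢
      refine ⟨hU w hw.1, fun hwO => hw.2 ?_⟩
      obtain ⟨i, hi, hiw⟩ := Finset.mem_image.1 hwO
      simp only [Finset.mem_Ico] at hi
      rcases i with _ | i
      · obtain ⟨k, rfl⟩ : ∃ k, M = k + 1 := ⟨M - 1, by omega⟩
        refine Finset.mem_image.2 ⟨k, by simp, hσ ?_⟩
        rw [← hiw]
        rw [Function.iterate_succ_apply'] at hper
        exact hper
      · refine Finset.mem_image.2 ⟨i, by simp; omega, hσ ?_⟩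
        rw [← hiw]
        exact (Function.iterate_succ_apply' _ _ _).symm)
    have := hj.union hrec Finset.disjoint_sdiff
    rwa [Finset.union_sdiff_of_subset hOU] at this

end Aux

/-- every connected bipartite cubic graph of order n admits an IPD of at
most n/3 induced paths, i.e. ρ(G) ≤ n/3. -/
theorem bipartite_cubic_IPD_bound (G : SimpleGraph V) [DecidableRel G.Adj]
    (hconn : G.Connected) (hbip : G.Colorable 2)
    (hcubic : G.IsRegularOfDegree 3) :
    ∃ D : Set (Set V), Setoid.IsPartition D ∧
      (∀ P ∈ D, ∃ n, 2 ≤ n ∧ IsInducedPathOn G P n) ∧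
      D.ncard ≤ Fintype.card V / 3 := by
  classical
  obtain ⟨C⟩ := hbip
  have hc : ∀ u v, G.Adj u v → (fun v => decide (C v = 0)) u ≠ (fun v => decide (C v = 0)) v := by
    intro u v h
    have := C.valid h
    simp only [ne_eq, decide_eq_decide]
    omega
  have hdeg : ∀ v, (Finset.univ.filter (fun u => G.Adj v u)).card = 3 := by
    intro v
    rw [← hcubic v, ← G.card_neighborFinset_eq_degree]
    congr 1
    ext u; simp
  obtain ⟨σ, s1, s2, s3, s4⟩ := exists_two_factor hc (by convert hdeg)
  obtain ⟨D, d1, d2, d3⟩ := all_good hc (three_of_deg (by convert hdeg)) s1 s2 s3 s4 Finset.univ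
    (fun _ _ => Finset.mem_univ _)
  refine ⟨(fun P : Finset V => (P : Set V)) '' (D : Set (Finset V)), ⟨?_, ?_⟩, ?_, ?_⟩
  · rintro ⟨P, hP, h⟩
    have := (d1 P hP).1
    have h' : P = ∅ := by simpa using h
    rw [h'] at this
    simp at this
  · intro v
    obtain ⟨P, hP, hv⟩ := (d3 v).1 (Finset.mem_univ v)
    refine ⟨(P : Set V), ⟨⟨P, hP, rfl⟩, by simpa using hv⟩, ?_⟩
    rintro _ ⟨⟨Q, hQ, rfl⟩, hvQ⟩
    by_contra hne
    have : Q ≠ P := fun h => hne (by rw [h])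
    exact Finset.disjoint_left.1 (d2 Q hQ P hP this) (by simpa using hvQ) hv
  · rintro _ ⟨P, hP, rfl⟩
    exact ⟨_, by have := (d1 P hP).1; omega, (d1 P hP).2⟩
  · have h1 : ((fun P : Finset V => (P : Set V)) '' (D : Set (Finset V))).ncard ≤ D.card := by
      have := Set.ncard_image_le (f := fun P : Finset V => (P : Set V)) (D.finite_toSet)
      rwa [Set.ncard_coe_finset] at this
    have h2 : D.card * 3 ≤ Fintype.card V := by
      have e : D.biUnion (fun P => P) = Finset.univ := by
        ext v
        simpa using (d3 v).1 (Finset.mem_univ v)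
      rw [← Finset.card_univ, ← e, Finset.card_biUnion (fun P hP Q hQ h => d2 P hP Q hQ h)]
      have := Finset.card_nsmul_le_sum D (fun P => P.card) 3 (fun P hP => (d1 P hP).1)
      simpa using this
    exact h1.trans ((Nat.le_div_iff_mul_le (by norm_num)).2 h2)
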